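/- Assume: (a) the only x ∈ ℝ^n with Hx = 0, Ax = 0, and Cx = 0 is x = 0; and (b) there exist x̂ ∈ ℝ^n, π̂ ∈ ℝ^m, η̂, ζ̂ ∈ ℝ^p with Ax̂ ≥ b, Cx̂ = d, Hx̂ + c = Aᵀπ̂ + Cᵀ(η̂ − ζ̂), π̂ > 0 componentwise, and η̂, ζ̂ ≥ 0. Let sequences (x^k) ⊂ ℝ^n, (z^k), (π^k), (ξ^k) ⊂ ℝ^m, (y^k), (η^k), (ζ^k) ⊂ ℝ^p and scalars φ_k > 0 satisfy, for all k: z^k ≥ 0, s^k := Ax^k + z^k − b ≥ 0, t₊^k := Cx^k + y^k − d ≥ 0, t₋^k := −Cx^k + y^k + d ≥ 0, and π^k, ξ^k, η^k, ζ^k ≥ 0. Suppose φ_k → ∞, the sequence ((z^k, y^k)) is bounded, and K ⊆ ℕ is an infinite index set such that for k ∈ K the sequences (s^k ∘ π^k), (z^k ∘ ξ^k), (t₊^k ∘ η^k), (t₋^k ∘ ζ^k), (Hx^k + c − Aᵀπ^k − Cᵀ(η^k − ζ^k)), (π^k + ξ^k − φ_k·1), (η^k + ζ^k − φ_k·1),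 and ((Hx^k + c − Aᵀπ^k − Cᵀ(η^k − ζ^k))ᵀx^k) are all bounded. Then (z^k, y^k) → (0, 0) along K, and the subsequence (x^k)_{k∈K} is bounded. (Lemma 4.5.) -/

import Mathlib

open Matrix Filter

lemma aux_term {φ z s sh π ξ ph M0 M1 M2 M6 : ℝ} (hπ : 0 ≤ π) (hsh : 0 ≤ sh)
    (hph : 0 ≤ ph) (hz0 : 0 ≤ z) (hz : z ≤ M0)
    (h1 : |s * π| ≤ M1) (h2 : |z * ξ| ≤ M2) (h6 : |π + ξ - φ| ≤ M6) :
    φ * z + ph * s - (M1 + M2 + M6 * M0 + ph * M0 + ph * sh) ≤ -((π - ph) * (s - z - sh)) := by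
  have a1 := (abs_le.1 h1).2
  have a2 := (abs_le.1 h2).2
  have h60 : 0 ≤ M6 := (abs_nonneg _).trans h6
  have a3 : -(M6 * M0) ≤ (π + ξ - φ) * z := by
    have : -M6 * z ≤ (π + ξ - φ) * z := mul_le_mul_of_nonneg_right (abs_le.1 h6).1 hz0
    nlinarith [mul_le_mul_of_nonneg_left hz h60]
  have a4 := mul_nonneg hπ hsh
  have a5 := mul_le_mul_of_nonneg_left hz hph
  nlinarith

lemma aux_term2 {φ y q η ζ nh M0 M3 M4 M7 : ℝ}
    (hp : 0 ≤ q + y) (hm : 0 ≤ -q + y) (hy : y ≤ M0)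
    (h3 : |(q + y) * η| ≤ M3) (h4 : |(-q + y) * ζ| ≤ M4) (h7 : |η + ζ - φ| ≤ M7) :
    φ * y - (M3 + M4 + M7 * M0 + |nh| * M0) ≤ -((η - ζ - nh) * q) := by
  have a1 := (abs_le.1 h3).2
  have a2 := (abs_le.1 h4).2
  have hy0 : 0 ≤ y := by linarith
  have h70 : 0 ≤ M7 := (abs_nonneg _).trans h7
  have a3 : -(M7 * M0) ≤ (η + ζ - φ) * y := by
    have : -M7 * y ≤ (η + ζ - φ) * y := mul_le_mul_of_nonneg_right (abs_le.1 h7).1 hy0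
    nlinarith [mul_le_mul_of_nonneg_left hy h70]
  have a4 : -(|nh| * M0) ≤ nh * q := by
    have hq : |q| ≤ M0 := abs_le.2 ⟨by linarith, by linarith⟩
    have := mul_le_mul_of_nonneg_left hq (abs_nonneg nh)
    rw [← abs_mul] at this
    linarith [neg_abs_le (nh * q)]
  nlinarith

lemma aux_tendsto {q : ℕ} {B : ℝ} {φ : ℕ → ℝ} {K : Set ℕ} (hφpos : ∀ k, 0 < φ k)
    (hφ : Tendsto φ atTop atTop) (z : ℕ → Fin q → ℝ) (hz : ∀ k i, 0 ≤ z k i)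
    (hB : ∀ k ∈ K, ∀ i, φ k * z k i ≤ B) :
    Tendsto (fun k => z k) (atTop ⊓ Filter.principal K) (nhds 0) := by
  rw [tendsto_pi_nhds]
  intro i
  have h0 : Tendsto (fun k => B / φ k) (atTop ⊓ Filter.principal K) (nhds 0) :=
    (hφ.const_div_atTop B).mono_left inf_le_left
  refine tendsto_of_tendsto_of_tendsto_of_le_of_le' tendsto_const_nhds h0
    (Eventually.of_forall fun k => hz k i) ?_
  filter_upwards [mem_inf_of_right (mem_principal_self K)] with k hk
  rw [le_div_iff₀ (hφpos k), mul_comm]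
  exact hB k hk i

open scoped MatrixOrder Matrix.Norms.L2Operator in
lemma aux_factor {n : ℕ} (H : Matrix (Fin n) (Fin n) ℝ) (hH : H.PosSemidef) :
    ∃ R : Matrix (Fin n) (Fin n) ℝ, H = Rᵀ * R := by
  obtain ⟨R, hR⟩ := CStarAlgebra.nonneg_iff_eq_star_mul_self.mp hH.nonneg
  refine ⟨R, hR.trans ?_⟩
  rw [Matrix.star_eq_conjTranspose, Matrix.conjTranspose_eq_transpose_of_trivial]

lemma aux_bdd {n m p : ℕ} (H : Matrix (Fin n) (Fin n) ℝ) (hH : H.PosSemidef)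
    (A : Matrix (Fin m) (Fin n) ℝ) (C : Matrix (Fin p) (Fin n) ℝ)
    (hker : ∀ x : Fin n → ℝ, H.mulVec x = 0 → A.mulVec x = 0 →
      C.mulVec x = 0 → x = 0) (B : ℝ) :
    ∃ M : ℝ, ∀ w : Fin n → ℝ, w ⬝ᵥ H *ᵥ w ≤ B → (∀ i, |(A *ᵥ w) i| ≤ B) →
      (∀ j, |(C *ᵥ w) j| ≤ B) → ‖w‖ ≤ M := by
  obtain ⟨R, hR⟩ : ∃ R : Matrix (Fin n) (Fin n) ℝ, H = Rᵀ * R := by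
    exact aux_factor H hH
  let f : (Fin n → ℝ) →ₗ[ℝ] (Fin n → ℝ) × (Fin m → ℝ) × (Fin p → ℝ) :=
    R.mulVecLin.prod (A.mulVecLin.prod C.mulVecLin)
  have hf : LinearMap.ker f = ⊥ := by
    rw [LinearMap.ker_eq_bot']
    intro w hw
    have hw : R *ᵥ w = 0 ∧ A *ᵥ w = 0 ∧ C *ᵥ w = 0 :=
      ⟨congrArg Prod.fst hw, congrArg (fun q => q.2.1) hw, congrArg (fun q => q.2.2) hw⟩
    refine hker w ?_ hw.2.1 hw.2.2
    rw [hR, ← Matrix.mulVec_mulVec, hw.1, Matrix.mulVec_zero]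
  obtain ⟨κ, -, hκ⟩ := f.exists_antilipschitzWith hf
  refine ⟨κ * (|B| + 1), fun w h1 h2 h3 => ?_⟩
  have h := hκ.le_mul_dist w 0
  rw [map_zero, dist_zero_right, dist_zero_right] at h
  refine h.trans (mul_le_mul_of_nonneg_left ?_ κ.2)
  have hB := le_abs_self B
  have hB0 := abs_nonneg B
  refine max_le ?_ (max_le ?_ ?_)
  · refine (pi_norm_le_iff_of_nonneg (by positivity)).2 fun i => ?_
    change |(R *ᵥ w) i| ≤ _
    have e : w ⬝ᵥ H *ᵥ w = ∑ i, (R *ᵥ w) i * (R *ᵥ w) i := by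
      rw [hR, ← Matrix.mulVec_mulVec, Matrix.dotProduct_mulVec, Matrix.vecMul_transpose]
      rfl
    have := Finset.single_le_sum (f := fun i => (R *ᵥ w) i * (R *ᵥ w) i)
      (fun i _ => mul_self_nonneg _) (Finset.mem_univ i)
    refine abs_le_of_sq_le_sq ?_ (by positivity)
    nlinarith
  · refine (pi_norm_le_iff_of_nonneg (by positivity)).2 fun i => ?_
    change |(A *ᵥ w) i| ≤ _
    linarith [h2 i]
  · refine (pi_norm_le_iff_of_nonneg (by positivity)).2 fun i => ?_
    change |(C *ᵥ w) i| ≤ _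
    linarith [h3 i]

/-- Lemma 4.5: (z^k, y^k) → 0 along K and (x^k)_{k∈K} is
bounded, in the presence of equality constraints. -/
theorem z_y_to_zero_x_bounded_with_equalities
    {n m p : ℕ} (H : Matrix (Fin n) (Fin n) ℝ) (hH : H.PosSemidef)
    (c : Fin n → ℝ) (A : Matrix (Fin m) (Fin n) ℝ) (b : Fin m → ℝ)
    (C : Matrix (Fin p) (Fin n) ℝ) (d : Fin p → ℝ)
    (hker : ∀ x : Fin n → ℝ, H.mulVec x = 0 → A.mulVec x = 0 →
      C.mulVec x = 0 → x = 0)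
    (xhat : Fin n → ℝ) (pihat : Fin m → ℝ) (etahat zetahat : Fin p → ℝ)
    (hfeas : b ≤ A.mulVec xhat) (heq : C.mulVec xhat = d)
    (hdeq : H.mulVec xhat + c = Aᵀ.mulVec pihat + Cᵀ.mulVec (etahat - zetahat))
    (hdpos : ∀ i, 0 < pihat i) (heta : 0 ≤ etahat) (hzeta : 0 ≤ zetahat)
    (x : ℕ → Fin n → ℝ) (z π ξ : ℕ → Fin m → ℝ) (y η ζ : ℕ → Fin p → ℝ)
    (φ : ℕ → ℝ) (hφpos : ∀ k, 0 < φ k)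
    (hz : ∀ k, 0 ≤ z k) (hs : ∀ k, 0 ≤ A.mulVec (x k) + z k - b)
    (htp : ∀ k, 0 ≤ C.mulVec (x k) + y k - d)
    (htm : ∀ k, 0 ≤ -C.mulVec (x k) + y k + d)
    (hπ : ∀ k, 0 ≤ π k) (hξ : ∀ k, 0 ≤ ξ k)
    (hη : ∀ k, 0 ≤ η k) (hζ : ∀ k, 0 ≤ ζ k)
    (hφ : Tendsto φ atTop atTop)
    (hzybd : ∃ M : ℝ, ∀ k, max ‖z k‖ ‖y k‖ ≤ M)
    (K : Set ℕ) (hK : K.Infinite)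
    (hbd1 : ∃ M : ℝ, ∀ k ∈ K, ‖(A.mulVec (x k) + z k - b) * π k‖ ≤ M)
    (hbd2 : ∃ M : ℝ, ∀ k ∈ K, ‖z k * ξ k‖ ≤ M)
    (hbd3 : ∃ M : ℝ, ∀ k ∈ K, ‖(C.mulVec (x k) + y k - d) * η k‖ ≤ M)
    (hbd4 : ∃ M : ℝ, ∀ k ∈ K, ‖(-C.mulVec (x k) + y k + d) * ζ k‖ ≤ M)
    (hbd5 : ∃ M : ℝ, ∀ k ∈ K, ‖H.mulVec (x k) + c - Aᵀ.mulVec (π k)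
      - Cᵀ.mulVec (η k - ζ k)‖ ≤ M)
    (hbd6 : ∃ M : ℝ, ∀ k ∈ K, ‖π k + ξ k - fun _ => φ k‖ ≤ M)
    (hbd7 : ∃ M : ℝ, ∀ k ∈ K, ‖η k + ζ k - fun _ => φ k‖ ≤ M)
    (hbd8 : ∃ M : ℝ, ∀ k ∈ K,
      |(H.mulVec (x k) + c - Aᵀ.mulVec (π k) - Cᵀ.mulVec (η k - ζ k)) ⬝ᵥ x k| ≤ M) :
    Tendsto (fun k => z k) (atTop ⊓ Filter.principal K) (nhds 0) ∧
    Tendsto (fun k => y k) (atTop ⊓ Filter.principal K) (nhds 0) ∧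
    ∃ M : ℝ, ∀ k ∈ K, ‖x k‖ ≤ M := by
  obtain ⟨M0, h0⟩ := hzybd
  obtain ⟨M1, h1⟩ := hbd1
  obtain ⟨M2, h2⟩ := hbd2
  obtain ⟨M3, h3⟩ := hbd3
  obtain ⟨M4, h4⟩ := hbd4
  obtain ⟨M5, h5⟩ := hbd5
  obtain ⟨M6, h6⟩ := hbd6
  obtain ⟨M7, h7⟩ := hbd7
  obtain ⟨M8, h8⟩ := hbd8
  have hM0 : 0 ≤ M0 := ((norm_nonneg _).trans (le_max_left _ _)).trans (h0 0)
  have hzM : ∀ k i, z k i ≤ M0 := fun k i =>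
    (le_abs_self _).trans ((norm_le_pi_norm (z k) i).trans ((le_max_left _ _).trans (h0 k)))
  have hyM : ∀ k i, y k i ≤ M0 := fun k i =>
    (le_abs_self _).trans ((norm_le_pi_norm (y k) i).trans ((le_max_right _ _).trans (h0 k)))
  have htp' : ∀ k j, 0 ≤ (C *ᵥ x k) j + y k j - d j := fun k j => htp k j
  have htm' : ∀ k j, 0 ≤ -(C *ᵥ x k) j + y k j + d j := fun k j => htm k j
  have hs' : ∀ k i, 0 ≤ (A *ᵥ x k) i + z k i - b i := fun k i => hs k i
  have hsh : ∀ i, 0 ≤ (A *ᵥ xhat) i - b i := fun i => sub_nonneg.2 (hfeas i)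
  have hy : ∀ k j, 0 ≤ y k j := fun k j => by linarith [htp' k j, htm' k j]
  have hCw : ∀ k j, (C *ᵥ (x k - xhat)) j = (C *ᵥ x k) j - d j := fun k j => by
    rw [Matrix.mulVec_sub, heq]; rfl
  have hAw : ∀ k i, (A *ᵥ (x k - xhat)) i = ((A *ᵥ x k) i + z k i - b i) - z k i
      - ((A *ᵥ xhat) i - b i) := fun k i => by
    rw [Matrix.mulVec_sub, Pi.sub_apply]; ring
  obtain ⟨B, hB⟩ : ∃ B : ℝ, ∀ k ∈ K, (x k - xhat) ⬝ᵥ H *ᵥ (x k - xhat)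
      + ∑ i, (φ k * z k i + pihat i * ((A *ᵥ x k) i + z k i - b i))
      + ∑ j, φ k * y k j ≤ B := by
    refine ⟨M8 + ∑ i, M5 * |xhat i|
      + ∑ i, (M1 + M2 + M6 * M0 + pihat i * M0 + pihat i * ((A *ᵥ xhat) i - b i))
      + ∑ j, (M3 + M4 + M7 * M0 + |etahat j - zetahat j| * M0), fun k hk => ?_⟩
    set r := H.mulVec (x k) + c - Aᵀ.mulVec (π k) - Cᵀ.mulVec (η k - ζ k) with hr
    have hr' : r = H *ᵥ (x k - xhat) - Aᵀ *ᵥ (π k - pihat)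
        - Cᵀ *ᵥ (η k - ζ k - (etahat - zetahat)) := by
      have e : c = Aᵀ.mulVec pihat + Cᵀ.mulVec (etahat - zetahat) - H.mulVec xhat := by
        rw [← hdeq]; abel
      rw [hr, Matrix.mulVec_sub H, Matrix.mulVec_sub Aᵀ, Matrix.mulVec_sub Cᵀ _ (etahat - zetahat), e]
      abel
    have hid : r ⬝ᵥ (x k - xhat) = (x k - xhat) ⬝ᵥ H *ᵥ (x k - xhat)
        + ∑ i, -((π k i - pihat i) * (A *ᵥ (x k - xhat)) i)
        + ∑ j, -((η k j - ζ k j - (etahat j - zetahat j)) * (C *ᵥ (x k - xhat)) j) := by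
      rw [hr', sub_dotProduct, sub_dotProduct, Matrix.mulVec_transpose, Matrix.mulVec_transpose,
        ← Matrix.dotProduct_mulVec, ← Matrix.dotProduct_mulVec, dotProduct_comm,
        Finset.sum_neg_distrib, Finset.sum_neg_distrib, sub_eq_add_neg, sub_eq_add_neg]
      rfl
    have hup : r ⬝ᵥ (x k - xhat) ≤ M8 + ∑ i, M5 * |xhat i| := by
      have a : -(r ⬝ᵥ xhat) ≤ ∑ i, M5 * |xhat i| := by
        unfold dotProduct
        rw [← Finset.sum_neg_distrib]
        refine Finset.sum_le_sum fun i _ => ?_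
        have : |r i| ≤ M5 := (norm_le_pi_norm r i).trans (h5 k hk)
        calc -(r i * xhat i) ≤ |r i * xhat i| := neg_le_abs _
          _ = |r i| * |xhat i| := abs_mul _ _
          _ ≤ _ := mul_le_mul_of_nonneg_right this (abs_nonneg _)
      rw [dotProduct_sub]
      linarith [(abs_le.1 (h8 k hk)).2]
    have l1 := Finset.sum_le_sum (s := Finset.univ) fun (i : Fin m) _ =>
      aux_term (hπ k i) (hsh i) (hdpos i).le (hz k i) (hzM k i)
        ((norm_le_pi_norm _ i).trans (h1 k hk)) ((norm_le_pi_norm _ i).trans (h2 k hk))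
        ((norm_le_pi_norm _ i).trans (h6 k hk))
    have l2 := Finset.sum_le_sum (s := Finset.univ) fun (j : Fin p) _ =>
      aux_term2 (φ := φ k) (y := y k j) (q := (C *ᵥ x k) j - d j) (η := η k j) (ζ := ζ k j)
        (nh := etahat j - zetahat j) (M3 := M3) (M4 := M4) (M7 := M7)
        (by linarith [htp' k j]) (by linarith [htm' k j]) (hyM k j)
        (by
          have : |((C *ᵥ x k) j + y k j - d j) * η k j| ≤ M3 :=
            (norm_le_pi_norm _ j).trans (h3 k hk)
          convert this using 2; ring)
        (by
          have : |(-(C *ᵥ x k) j + y k j + d j) * ζ k j| ≤ M4 :=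
            (norm_le_pi_norm _ j).trans (h4 k hk)
          convert this using 2; ring)
        ((norm_le_pi_norm _ j).trans (h7 k hk))
    rw [Finset.sum_sub_distrib] at l1 l2
    simp only [hAw, hCw] at hid
    simp only [Pi.add_apply, Pi.sub_apply] at l1
    linarith
  have nH : ∀ w : Fin n → ℝ, 0 ≤ w ⬝ᵥ H *ᵥ w := fun w => by
    simpa using hH.dotProduct_mulVec_nonneg w
  have nz : ∀ k i, 0 ≤ φ k * z k i := fun k i => mul_nonneg (hφpos k).le (hz k i)
  have ns : ∀ k i, 0 ≤ pihat i * ((A *ᵥ x k) i + z k i - b i) := fun k i =>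
    mul_nonneg (hdpos i).le (hs' k i)
  have ny : ∀ k j, 0 ≤ φ k * y k j := fun k j => mul_nonneg (hφpos k).le (hy k j)
  have sy : ∀ k, 0 ≤ ∑ j, φ k * y k j := fun k => Finset.sum_nonneg fun j _ => ny k j
  have sz : ∀ k, 0 ≤ ∑ i, (φ k * z k i + pihat i * ((A *ᵥ x k) i + z k i - b i)) :=
    fun k => Finset.sum_nonneg fun i _ => add_nonneg (nz k i) (ns k i)
  have bz : ∀ k ∈ K, ∀ i, φ k * z k i + pihat i * ((A *ᵥ x k) i + z k i - b i) ≤ B := by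
    intro k hk i
    have := Finset.single_le_sum
      (f := fun i => φ k * z k i + pihat i * ((A *ᵥ x k) i + z k i - b i))
      (fun i _ => add_nonneg (nz k i) (ns k i)) (Finset.mem_univ i)
    linarith [hB k hk, nH (x k - xhat), sy k]
  have byy : ∀ k ∈ K, ∀ j, φ k * y k j ≤ B := by
    intro k hk j
    have := Finset.single_le_sum (f := fun j => φ k * y k j)
      (fun j _ => ny k j) (Finset.mem_univ j)
    linarith [hB k hk, nH (x k - xhat), sz k]
  refine ⟨aux_tendsto (B := B) hφpos hφ z (fun k i => hz k i)
    (fun k hk i => by linarith [bz k hk i, ns k i]), aux_tendsto (B := B) hφpos hφ y hy byy, ?_⟩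
  have sS : 0 ≤ ∑ i, |B| / pihat i :=
    Finset.sum_nonneg fun i _ => div_nonneg (abs_nonneg _) (hdpos i).le
  have sH : 0 ≤ ∑ i, ((A *ᵥ xhat) i - b i) := Finset.sum_nonneg fun i _ => hsh i
  obtain ⟨M, hM⟩ := aux_bdd H hH A C hker
    (|B| + M0 + ∑ i, |B| / pihat i + ∑ i, ((A *ᵥ xhat) i - b i))
  refine ⟨M + ‖xhat‖, fun k hk => ?_⟩
  have hB1 := le_abs_self B
  have hB2 := abs_nonneg B
  have key : ‖x k - xhat‖ ≤ M := by
    refine hM _ ?_ ?_ ?_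
    · linarith [hB k hk, sy k, sz k]
    · intro i
      rw [hAw]
      have e1 : (A *ᵥ x k) i + z k i - b i ≤ |B| / pihat i := by
        rw [le_div_iff₀ (hdpos i), mul_comm]
        linarith [bz k hk i, nz k i]
      have e2 := Finset.single_le_sum (f := fun i => |B| / pihat i)
        (fun i _ => div_nonneg (abs_nonneg _) (hdpos i).le) (Finset.mem_univ i)
      have e3 := Finset.single_le_sum (f := fun i => (A *ᵥ xhat) i - b i)
        (fun i _ => hsh i) (Finset.mem_univ i)
      have e4 := hs' k i
      have e5 := hzM k i
      have e6 : 0 ≤ z k i := hz k i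
      have e7 := hsh i
      rw [abs_le]
      constructor <;> linarith
    · intro j
      rw [hCw, abs_le]
      constructor <;> linarith [htp' k j, htm' k j, hyM k j]
  calc ‖x k‖ = ‖(x k - xhat) + xhat‖ := by rw [sub_add_cancel]
    _ ≤ ‖x k - xhat‖ + ‖xhat‖ := norm_add_le _ _
    _ ≤ _ := by linarith
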